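/- Sub-Gaussian lower bound on the expected true loss: if the loss operator satisfies the classical-quantum α-sub-Gaussian property with respect to the product state σ_prod, then for any γ > 1, exp(L_true) ≥ L_emp · exp(−[γα²/(2(γ−1)) + ((γ−1)/γ) D̃_γ(σ_joint‖σ_prod)]), where L_emp = Tr[L σ_joint], L_true = Tr[L σ_prod], and D̃_γ is the sandwiched Rényi divergence. -/

import Mathlib

open Matrix
open scoped ComplexOrder

variable {d : Type*} [Fintype d] [DecidableEq d]

/-- Apply a real function to a Hermitian matrix via the spectral theorem
(junk value `0` for non-Hermitian matrices). -/
noncomputable def matFun (f : ℝ → ℝ) (A : Matrix d d ℂ) : Matrix d d ℂ :=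
  if hA : A.IsHermitian then
    (hA.eigenvectorUnitary : Matrix d d ℂ) *
      Matrix.diagonal (fun i => (f (hA.eigenvalues i) : ℂ)) *
      (star (hA.eigenvectorUnitary : Matrix d d ℂ))
  else 0

/-- Matrix logarithm (via spectral calculus, with `Real.log 0 = 0` on the kernel). -/
noncomputable def mlog (A : Matrix d d ℂ) : Matrix d d ℂ := matFun Real.log A

/-- Quantum (Umegaki) relative entropy `D(ρ‖σ) = Tr[ρ(log ρ − log σ)]`. -/
noncomputable def qRelEnt (ρ σ : Matrix d d ℂ) : ℝ :=
  (Matrix.trace (ρ * (mlog ρ - mlog σ))).re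

/-- `ρ` is a density operator. -/
def IsDensity (ρ : Matrix d d ℂ) : Prop := ρ.PosSemidef ∧ Matrix.trace ρ = 1

/-- `supp ρ ⊆ supp σ`, stated as `ker σ ⊆ ker ρ`. -/
def SuppLE (ρ σ : Matrix d d ℂ) : Prop := ∀ v : d → ℂ, σ.mulVec v = 0 → ρ.mulVec v = 0

/-- Matrix exponential via spectral calculus. -/
noncomputable def mexp (A : Matrix d d ℂ) : Matrix d d ℂ := matFun Real.exp A

/-- Real power of a (positive semidefinite) matrix via spectral calculus. -/
noncomputable def mpow (A : Matrix d d ℂ) (p : ℝ) : Matrix d d ℂ :=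
  matFun (fun x => x ^ p) A

/-- The sandwiched Rényi divergence of order `γ`:
`D̃_γ(ρ‖σ) = (1/(γ−1)) ln Tr[(σ^{(1−γ)/(2γ)} ρ σ^{(1−γ)/(2γ)})^γ]`. -/
noncomputable def sandwichedRenyi (γ : ℝ) (ρ σ : Matrix d d ℂ) : ℝ :=
  (γ - 1)⁻¹ *
    Real.log ((Matrix.trace
      (mpow (mpow σ ((1 - γ) / (2 * γ)) * ρ * mpow σ ((1 - γ) / (2 * γ))) γ)).re)

/-!
Since `L ⪯ e^L`, it suffices to bound `Tr[e^L σ_joint]`. With `p = γ/(γ-1)` and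
`X = σ_prod^((1-γ)/(2γ)) σ_joint σ_prod^((1-γ)/(2γ))`, the support condition gives
`Tr[e^L σ_joint] = Tr[σ_prod^(1/(2p)) e^L σ_prod^(1/(2p)) X]`, and for all positive semidefinite
`S`, `M`, `X` one has

  `|Tr[S^(1/(2p)) M S^(1/(2p)) X]| ≤ (Tr[M^p S])^(1/p) (Tr[X^γ])^(1/γ)`.

This combines Hölder's and the Araki–Lieb–Thirring inequality in one application of the three-lines
theorem, to `z ↦ Tr[S^(z/2) M^(pz) S^(z/2) X^(γ(1-z))]` at `z = 1/p`: imaginary powers are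
contractions, so on the two boundary lines Cauchy–Schwarz removes them from the trace. The factor
with `X` is the Rényi divergence, and `Tr[(e^L)^p σ_prod]` is the moment generating function of `L`
at `p`.
-/

section SpectralCalculus

variable {A : Matrix d d ℂ}

theorem matFun_eq_cfc (hA : A.IsHermitian) (f : ℝ → ℝ) : matFun f A = cfc f A := by
  rw [hA.cfc_eq, matFun, dif_pos hA]
  rfl

theorem isHermitian_matFun (f : ℝ → ℝ) (A : Matrix d d ℂ) : (matFun f A).IsHermitian := by
  by_cases hA : A.IsHermitian
  · rw [matFun_eq_cfc hA]
    exact cfc_predicate f A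
  · simp only [matFun, dif_neg hA, isHermitian_zero]

theorem continuousOn_real_spectrum (f : ℝ → ℝ) (A : Matrix d d ℂ) :
    ContinuousOn f (spectrum ℝ A) :=
  A.finite_real_spectrum.continuousOn f

theorem matFun_mul_matFun (hA : A.IsHermitian) (f g : ℝ → ℝ) :
    matFun f A * matFun g A = matFun (fun x => f x * g x) A := by
  simp only [matFun_eq_cfc hA]
  exact (cfc_mul f g A (continuousOn_real_spectrum f A) (continuousOn_real_spectrum g A)).symm

theorem matFun_comp (hA : A.IsHermitian) (f g : ℝ → ℝ) :
    matFun f (matFun g A) = matFun (f ∘ g) A := by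
  rw [matFun_eq_cfc (isHermitian_matFun g A), matFun_eq_cfc hA, matFun_eq_cfc hA]
  exact (cfc_comp f g A hA
    ((A.finite_real_spectrum.image g).continuousOn f) (continuousOn_real_spectrum g A)).symm

theorem matFun_id (hA : A.IsHermitian) : matFun id A = A := by
  rw [matFun_eq_cfc hA]
  exact cfc_id ℝ A hA

open scoped Matrix.Norms.L2Operator MatrixOrder

theorem matFun_congr_of_posSemidef (hA : A.PosSemidef) {f g : ℝ → ℝ}
    (hfg : Set.EqOn f g (Set.Ici 0)) : matFun f A = matFun g A := by
  rw [matFun_eq_cfc hA.isHermitian, matFun_eq_cfc hA.isHermitian]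
  exact cfc_congr fun x hx => hfg (spectrum_nonneg_of_nonneg hA.nonneg hx)

theorem matFun_mono (hA : A.IsHermitian) {f g : ℝ → ℝ} (hfg : ∀ x, f x ≤ g x) :
    matFun f A ≤ matFun g A := by
  rw [matFun_eq_cfc hA, matFun_eq_cfc hA]
  exact cfc_mono (fun x _ => hfg x) (continuousOn_real_spectrum f A)
    (continuousOn_real_spectrum g A)

theorem posSemidef_mpow (hA : A.PosSemidef) (t : ℝ) : (mpow A t).PosSemidef := by
  rw [mpow, matFun_eq_cfc hA.isHermitian]
  exact (cfc_nonneg fun x hx =>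
    Real.rpow_nonneg (spectrum_nonneg_of_nonneg hA.nonneg hx) t).posSemidef

theorem mpow_one (hA : A.IsHermitian) : mpow A 1 = A := by
  simp only [mpow, Real.rpow_one]
  exact matFun_id hA

theorem mpow_half_mul_self (hA : A.PosSemidef) {t : ℝ} (ht : t ≠ 0) :
    mpow A (t / 2) * mpow A (t / 2) = mpow A t := by
  rw [mpow, matFun_mul_matFun hA.isHermitian]
  refine matFun_congr_of_posSemidef hA fun x hx => ?_
  rw [← Real.rpow_add' hx (by simpa only [add_halves] using ht), add_halves]

theorem posSemidef_mexp (hA : A.IsHermitian) : (mexp A).PosSemidef := by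
  rw [mexp, matFun_eq_cfc hA]
  exact (cfc_nonneg fun x _ => (Real.exp_pos x).le).posSemidef

theorem le_mexp (hA : A.IsHermitian) : A ≤ mexp A := by
  conv_lhs => rw [← matFun_id hA]
  exact matFun_mono hA fun x => (lt_add_one x).le.trans (Real.add_one_le_exp x)

theorem mpow_mexp (hA : A.IsHermitian) (p c : ℝ) :
    mpow (mexp A) p = Real.exp (p * c) • mexp (p • (A - c • (1 : Matrix d d ℂ))) := by
  have affine_eq : p • (A - c • (1 : Matrix d d ℂ)) = matFun (fun x => p * (x - c)) A := by
    have : IsSelfAdjoint A := hA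
    rw [matFun_eq_cfc hA, cfc_const_mul p (fun x : ℝ => x - c) A,
      cfc_sub (fun x : ℝ => x) (fun _ => c) A, cfc_id' ℝ A, cfc_const c A,
      Algebra.algebraMap_eq_smul_one]
  rw [affine_eq, mexp, mexp, mpow, matFun_comp hA, matFun_comp hA, matFun_eq_cfc hA,
    matFun_eq_cfc hA, ← cfc_smul _ _ _ (continuousOn_real_spectrum _ A)]
  congr 1
  funext x
  simp only [Function.comp_apply, smul_eq_mul]
  rw [← Real.exp_mul, ← Real.exp_add]
  ring_nf

end SpectralCalculus

section SupportProjection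

variable {ρ σ : Matrix d d ℂ}

/-- The orthogonal projection onto the support of a Hermitian matrix; it is the unit against which
negative powers of a singular matrix are inverse to positive ones. -/
noncomputable def suppProj (A : Matrix d d ℂ) : Matrix d d ℂ :=
  matFun (fun x => if x = 0 then 0 else 1) A

theorem isStarProjection_suppProj (hσ : σ.IsHermitian) : IsStarProjection (suppProj σ) where
  isIdempotentElem := by
    rw [IsIdempotentElem, suppProj, matFun_mul_matFun hσ]
    congr 1
    funext x
    split_ifs <;> simp only [mul_zero, mul_one]
  isSelfAdjoint := isHermitian_matFun _ σ

theorem mul_suppProj_self (hσ : σ.IsHermitian) : σ * suppProj σ = σ := by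
  nth_rw 1 3 [← matFun_id hσ]
  rw [suppProj, matFun_mul_matFun hσ]
  congr 1
  funext x
  split_ifs with hx <;> simp [hx]

theorem mul_suppProj_of_suppLE (hσ : σ.IsHermitian) (hρσ : SuppLE ρ σ) :
    ρ * suppProj σ = ρ := by
  have hσ_ker : σ * (suppProj σ - 1) = 0 := by
    rw [mul_sub, mul_suppProj_self hσ, mul_one, sub_self]
  have hρ_ker : ρ * (suppProj σ - 1) = 0 := by
    ext i j
    exact congrFun (hρσ (fun k => (suppProj σ - 1) k j) (funext fun k => congrFun₂ hσ_ker k j)) i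
  rwa [mul_sub, mul_one, sub_eq_zero] at hρ_ker

theorem suppProj_mul_of_suppLE (hρ : ρ.IsHermitian) (hσ : σ.IsHermitian) (hρσ : SuppLE ρ σ) :
    suppProj σ * ρ = ρ := by
  simpa only [conjTranspose_mul, hρ.eq, (isHermitian_matFun _ σ).eq, suppProj] using
    congrArg conjTranspose (mul_suppProj_of_suppLE hσ hρσ)

theorem mpow_mul_mpow_neg (hσ : σ.PosSemidef) {t : ℝ} (ht : t ≠ 0) :
    mpow σ t * mpow σ (-t) = suppProj σ := by
  rw [mpow, mpow, suppProj, matFun_mul_matFun hσ.isHermitian]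
  refine matFun_congr_of_posSemidef hσ fun x hx => ?_
  rcases eq_or_ne x 0 with rfl | hx0
  · simp only [Real.zero_rpow ht, zero_mul, if_true]
  · simp only [if_neg hx0]
    rw [← Real.rpow_add (lt_of_le_of_ne hx hx0.symm), add_neg_cancel, Real.rpow_zero]

end SupportProjection

section ComplexPower

open scoped Matrix.Norms.L2Operator

variable {A : Matrix d d ℂ}

/-- The complex power `A ^ z` of a positive semidefinite matrix, cut down to the support of `A`:
it vanishes on the kernel of `A` even at `z = 0`, so that it is entire in `z` for singular `A`. -/
noncomputable def suppCPow (A : Matrix d d ℂ) (z : ℂ) : Matrix d d ℂ :=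
  suppProj A * NormedSpace.exp (z • mlog A)

theorem differentiable_suppCPow (A : Matrix d d ℂ) : Differentiable ℂ (suppCPow A) := by
  unfold suppCPow
  fun_prop

theorem suppCPow_add (hA : A.IsHermitian) (z w : ℂ) :
    suppCPow A (z + w) = suppCPow A z * suppCPow A w := by
  have hcomm : Commute (mlog A) (suppProj A) := by
    rw [mlog, suppProj, matFun_eq_cfc hA, matFun_eq_cfc hA]
    exact cfc_commute_cfc _ _ A
  have hexp : Commute (NormedSpace.exp (z • mlog A)) (suppProj A) :=
    (hcomm.smul_left z).exp_left
  rw [suppCPow, suppCPow, suppCPow, add_smul,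
    Matrix.exp_add_of_commute _ _ (((Commute.refl _).smul_left z).smul_right w), mul_assoc,
    hexp.left_comm, ← mul_assoc (suppProj A) (suppProj A),
    (isStarProjection_suppProj hA).isIdempotentElem.eq]

theorem suppCPow_ofReal (hA : A.PosSemidef) {t : ℝ} (ht : t ≠ 0) :
    suppCPow A t = mpow A t := by
  have hlog : (t : ℂ) • mlog A = matFun (fun x => t * Real.log x) A := by
    rw [mlog, matFun_eq_cfc hA.isHermitian, matFun_eq_cfc hA.isHermitian,
      cfc_const_mul _ _ _ (continuousOn_real_spectrum _ A), Complex.coe_smul]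
  rw [suppCPow, hlog, ← CFC.real_exp_eq_normedSpace_exp (isHermitian_matFun _ A),
    ← matFun_eq_cfc (isHermitian_matFun _ A), matFun_comp hA.isHermitian, suppProj,
    matFun_mul_matFun hA.isHermitian]
  refine matFun_congr_of_posSemidef hA fun x hx => ?_
  rcases eq_or_ne x 0 with rfl | hx0
  · simp [Real.zero_rpow ht]
  · simp [hx0, Real.rpow_def_of_pos (lt_of_le_of_ne hx hx0.symm), mul_comm]

theorem mpow_mul_suppCPow (hA : A.PosSemidef) {t : ℝ} (ht : t ≠ 0) (w : ℂ) :
    mpow A t * suppCPow A w = suppCPow A (t + w) := by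
  rw [suppCPow_add hA.isHermitian, suppCPow_ofReal hA ht]

theorem suppCPow_mul_mpow (hA : A.PosSemidef) {t : ℝ} (ht : t ≠ 0) (w : ℂ) :
    suppCPow A w * mpow A t = suppCPow A (w + t) := by
  rw [suppCPow_add hA.isHermitian, suppCPow_ofReal hA ht]

theorem mpow_half_mul_suppCPow_mul_mpow_half (hA : A.PosSemidef) {t : ℝ} (ht : t ≠ 0) (w : ℂ) :
    mpow A (t / 2) * suppCPow A w * mpow A (t / 2) = suppCPow A (t + w) := by
  have ht2 : t / 2 ≠ 0 := div_ne_zero ht two_ne_zero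
  rw [mpow_mul_suppCPow hA ht2, suppCPow_mul_mpow hA ht2]
  congr 1
  push_cast
  ring

theorem norm_suppCPow_le_one (hA : A.IsHermitian) {z : ℂ} (hz : z.re = 0) :
    ‖suppCPow A z‖ ≤ 1 := by
  have hskew : z • mlog A ∈ skewAdjoint (Matrix d d ℂ) := by
    have hz' : star z = -z := Complex.ext (by simp [hz]) (by simp)
    rw [skewAdjoint.mem_iff, star_smul, hz', neg_smul, mlog, star_eq_conjTranspose,
      (isHermitian_matFun _ A).eq]
  let +nondep : NormedAlgebra ℚ (Matrix d d ℂ) := .restrictScalars ℚ ℂ _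
  rw [suppCPow,
    CStarRing.norm_mul_mem_unitary _ (NormedSpace.exp_mem_unitary_of_mem_skewAdjoint hskew)]
  exact (isStarProjection_suppProj hA).norm_le

theorem norm_suppCPow_le_re (hA : A.IsHermitian) (z : ℂ) :
    ‖suppCPow A z‖ ≤ ‖suppCPow A (z.re : ℂ)‖ := by
  calc ‖suppCPow A z‖ = ‖suppCPow A z.re * suppCPow A (z.im * Complex.I)‖ := by
        rw [← suppCPow_add hA, Complex.re_add_im]
    _ ≤ ‖suppCPow A z.re‖ * ‖suppCPow A (z.im * Complex.I)‖ := norm_mul_le _ _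
    _ ≤ ‖suppCPow A z.re‖ := mul_le_of_le_one_right (norm_nonneg _)
        (norm_suppCPow_le_one hA (by simp))

theorem norm_suppCPow_mul_mul_le_one {B : Matrix d d ℂ} (hA : A.IsHermitian) (hB : B.IsHermitian)
    {z w : ℂ} (hz : z.re = 0) (hw : w.re = 0) :
    ‖suppCPow A z * suppCPow B w * suppCPow A z‖ ≤ 1 := by
  have hAz := norm_suppCPow_le_one hA hz
  simpa only [mul_one] using
    norm_mul_le_of_le (norm_mul_le_of_le hAz (norm_suppCPow_le_one hB hw)) hAz

theorem exists_forall_norm_suppCPow_le (hA : A.IsHermitian) (R : ℝ) :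
    ∃ C, ∀ z : ℂ, |z.re| ≤ R → ‖suppCPow A z‖ ≤ C := by
  have hcont : Continuous fun t : ℝ => ‖suppCPow A (t : ℂ)‖ :=
    ((differentiable_suppCPow A).continuous.comp Complex.continuous_ofReal).norm
  obtain ⟨C, hC⟩ := (isCompact_Icc (a := -R) (b := R)).bddAbove_image hcont.continuousOn
  exact ⟨C, fun z hz => (norm_suppCPow_le_re hA z).trans (hC ⟨z.re, abs_le.mp hz, rfl⟩)⟩

end ComplexPower

section Trace

variable {d : Type*} [Fintype d]

open scoped Matrix.Norms.L2Operator MatrixOrder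

theorem re_trace_mul_nonneg {A B : Matrix d d ℂ} (hA : A.PosSemidef) (hB : B.PosSemidef) :
    0 ≤ (trace (A * B)).re := by
  classical
  obtain ⟨C, rfl⟩ := CStarAlgebra.nonneg_iff_eq_star_mul_self.mp hB.nonneg
  rw [← mul_assoc, trace_mul_comm, ← mul_assoc]
  exact (Complex.le_def.mp (hA.mul_mul_conjTranspose_same C).trace_nonneg).1

theorem re_trace_mul_le_re_trace_mul {A B C : Matrix d d ℂ} (hAB : A ≤ B) (hC : C.PosSemidef) :
    (trace (A * C)).re ≤ (trace (B * C)).re := by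
  have := re_trace_mul_nonneg (le_iff.mp hAB) hC
  rwa [sub_mul, trace_sub, Complex.sub_re, sub_nonneg] at this

theorem re_trace_conjTranspose_mul_self_nonneg (A : Matrix d d ℂ) : 0 ≤ (trace (Aᴴ * A)).re :=
  (Complex.le_def.mp (posSemidef_conjTranspose_mul_self A).trace_nonneg).1

theorem norm_trace_conjTranspose_mul_sq_le (A B : Matrix d d ℂ) :
    ‖trace (Aᴴ * B)‖ ^ 2 ≤ (trace (Aᴴ * A)).re * (trace (Bᴴ * B)).re := by
  classical
  let := toMatrixSeminormedAddCommGroup (1 : Matrix d d ℂ) PosSemidef.one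
  let := toMatrixInnerProductSpace (1 : Matrix d d ℂ) PosSemidef.one
  have hinner (U V : Matrix d d ℂ) : inner ℂ U V = trace (Uᴴ * V) := by
    rw [trace_mul_comm]
    exact congrArg (fun W => trace (W * Uᴴ)) (mul_one V)
  have hcs := inner_mul_inner_self_le (𝕜 := ℂ) A B
  rwa [norm_inner_symm B A, ← sq, hinner, hinner, hinner] at hcs

variable [DecidableEq d]

theorem re_trace_conjTranspose_mul_self_mul_le (K B : Matrix d d ℂ) :
    (trace ((K * B)ᴴ * (K * B))).re ≤ ‖K‖ ^ 2 * (trace (Bᴴ * B)).re := by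
  have hle : (K * B)ᴴ * (K * B) ≤ ‖K‖ ^ 2 • (Bᴴ * B) := by
    have := CStarAlgebra.star_left_conjugate_le_norm_smul (a := B) (b := star K * K)
    rw [CStarRing.norm_star_mul_self, ← sq] at this
    simpa only [star_eq_conjTranspose, conjTranspose_mul, mul_assoc] using this
  simpa only [mul_one, trace_smul, Complex.smul_re, smul_eq_mul] using
    re_trace_mul_le_re_trace_mul hle PosSemidef.one

theorem norm_trace_conjTranspose_mul_mul_mul_le (B K₁ K₂ : Matrix d d ℂ) :
    ‖trace (Bᴴ * K₁ * B * K₂)‖ ≤ ‖K₁‖ * ‖K₂‖ * (trace (Bᴴ * B)).re := by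
  have hB := re_trace_conjTranspose_mul_self_nonneg B
  refine le_of_sq_le_sq ?_ (by positivity)
  calc ‖trace (Bᴴ * K₁ * B * K₂)‖ ^ 2 = ‖trace (Bᴴ * (K₁ * (B * K₂)))‖ ^ 2 := by
        simp only [mul_assoc]
    _ ≤ (trace (Bᴴ * B)).re * (trace ((K₁ * (B * K₂))ᴴ * (K₁ * (B * K₂)))).re :=
        norm_trace_conjTranspose_mul_sq_le _ _
    _ ≤ (trace (Bᴴ * B)).re * (‖K₁‖ ^ 2 * (trace ((B * K₂)ᴴ * (B * K₂))).re) := by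
        gcongr
        exact re_trace_conjTranspose_mul_self_mul_le _ _
    _ = (trace (Bᴴ * B)).re * (‖K₁‖ ^ 2 * (trace ((K₂ᴴ * Bᴴ)ᴴ * (K₂ᴴ * Bᴴ))).re) := by
        rw [trace_mul_comm (B * K₂)ᴴ, ← conjTranspose_mul, conjTranspose_conjTranspose]
    _ ≤ (trace (Bᴴ * B)).re * (‖K₁‖ ^ 2 * (‖K₂ᴴ‖ ^ 2 * (trace (Bᴴᴴ * Bᴴ)).re)) := by
        gcongr
        exact re_trace_conjTranspose_mul_self_mul_le _ _
    _ = (‖K₁‖ * ‖K₂‖ * (trace (Bᴴ * B)).re) ^ 2 := by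
        rw [l2_opNorm_conjTranspose, conjTranspose_conjTranspose, trace_mul_comm B]
        ring

end Trace

section Interpolation

open Complex.HadamardThreeLines
open scoped Matrix.Norms.L2Operator

variable {S M X : Matrix d d ℂ} {p q : ℝ}

/-- The entire function `z ↦ Tr[S^(z/2) M^(pz) S^(z/2) X^(q(1-z))]` of Stein interpolation. Its
modulus is at most `Tr[X^q]` on `Re z = 0` and at most `Tr[M^p S]` on `Re z = 1`. -/
noncomputable def traceInterpolant (S M X : Matrix d d ℂ) (p q : ℝ) (z : ℂ) : ℂ :=
  trace (suppCPow S (z / 2) * suppCPow M (p * z) * suppCPow S (z / 2) * suppCPow X (q * (1 - z)))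

theorem differentiable_traceInterpolant (S M X : Matrix d d ℂ) (p q : ℝ) :
    Differentiable ℂ (traceInterpolant S M X p q) := by
  have hpow (A : Matrix d d ℂ) {φ : ℂ → ℂ} (hφ : Differentiable ℂ φ) :
      Differentiable ℂ fun z => suppCPow A (φ z) := (differentiable_suppCPow A).comp hφ
  have htrace : Differentiable ℂ (traceLinearMap d ℂ ℂ) :=
    (traceLinearMap d ℂ ℂ).toContinuousLinearMap.differentiable
  exact htrace.comp <| (((hpow S (by fun_prop)).mul (hpow M (by fun_prop))).mul
    (hpow S (by fun_prop))).mul (hpow X (by fun_prop))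

theorem bddAbove_norm_traceInterpolant (hS : S.IsHermitian) (hM : M.IsHermitian)
    (hX : X.IsHermitian) (p q : ℝ) :
    BddAbove ((norm ∘ traceInterpolant S M X p q) '' verticalClosedStrip 0 1) := by
  obtain ⟨CS, hCS⟩ := exists_forall_norm_suppCPow_le hS 1
  obtain ⟨CM, hCM⟩ := exists_forall_norm_suppCPow_le hM |p|
  obtain ⟨CX, hCX⟩ := exists_forall_norm_suppCPow_le hX |q|
  refine ⟨CS * CM * CS * CX * (trace (1 : Matrix d d ℂ)).re, ?_⟩
  rintro _ ⟨z, ⟨hz₀, hz₁⟩, rfl⟩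
  have hSz : ‖suppCPow S (z / 2)‖ ≤ CS := hCS _ <| by
    rw [Complex.div_ofNat_re, abs_le]
    constructor <;> linarith
  have hMz : ‖suppCPow M (p * z)‖ ≤ CM := hCM _ <| by
    rw [Complex.re_ofReal_mul, abs_mul, abs_of_nonneg hz₀]
    exact mul_le_of_le_one_right (abs_nonneg p) hz₁
  have hXz : ‖suppCPow X (q * (1 - z))‖ ≤ CX := hCX _ <| by
    rw [Complex.re_ofReal_mul, Complex.sub_re, Complex.one_re, abs_mul,
      abs_of_nonneg (sub_nonneg.mpr hz₁)]
    exact mul_le_of_le_one_right (abs_nonneg q) (sub_le_self 1 hz₀)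
  have htrace := norm_trace_conjTranspose_mul_mul_mul_le 1
    (suppCPow S (z / 2) * suppCPow M (p * z) * suppCPow S (z / 2)) (suppCPow X (q * (1 - z)))
  have hone := re_trace_conjTranspose_mul_self_nonneg (1 : Matrix d d ℂ)
  simp only [conjTranspose_one, one_mul, mul_one] at htrace hone
  refine htrace.trans (mul_le_mul_of_nonneg_right ?_ hone)
  exact mul_le_mul (norm_mul_le_of_le (norm_mul_le_of_le hSz hMz) hSz) hXz (norm_nonneg _)
    (by positivity [(norm_nonneg _).trans hSz, (norm_nonneg _).trans hMz])

theorem norm_traceInterpolant_le_of_re_eq_zero (hS : S.IsHermitian) (hM : M.IsHermitian)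
    (hX : X.PosSemidef) (p : ℝ) (hq : q ≠ 0) {z : ℂ} (hz : z.re = 0) :
    ‖traceInterpolant S M X p q z‖ ≤ (trace (mpow X q)).re := by
  let B := mpow X (q / 2)
  let K₁ := suppCPow X (-(q * z))
  let K₂ := suppCPow S (z / 2) * suppCPow M (p * z) * suppCPow S (z / 2)
  have hB : Bᴴ = B := isHermitian_matFun _ X
  have hBB : Bᴴ * B = mpow X q := by rw [hB, mpow_half_mul_self hX hq]
  have hXz : suppCPow X (q * (1 - z)) = B * K₁ * B := by
    rw [mpow_half_mul_suppCPow_mul_mpow_half hX hq]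
    ring_nf
  have hK₁ : ‖K₁‖ ≤ 1 := norm_suppCPow_le_one hX.isHermitian (by simp [hz])
  have hK₂ : ‖K₂‖ ≤ 1 := norm_suppCPow_mul_mul_le_one hS hM (by simp [hz]) (by simp [hz])
  calc ‖traceInterpolant S M X p q z‖ = ‖trace (Bᴴ * K₁ * B * K₂)‖ := by
        rw [traceInterpolant, trace_mul_comm, hXz, hB]
    _ ≤ ‖K₁‖ * ‖K₂‖ * (trace (Bᴴ * B)).re := norm_trace_conjTranspose_mul_mul_mul_le B K₁ K₂
    _ ≤ (trace (Bᴴ * B)).re := mul_le_of_le_one_left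
        (re_trace_conjTranspose_mul_self_nonneg B) (mul_le_one₀ hK₁ (norm_nonneg _) hK₂)
    _ = (trace (mpow X q)).re := by rw [hBB]

theorem traceInterpolant_one_add (hS : S.PosSemidef) (hM : M.PosSemidef) (X : Matrix d d ℂ)
    (hp : p ≠ 0) (q : ℝ) (w : ℂ) :
    traceInterpolant S M X p q (1 + w) =
      trace (mpow S (1 / 2) * mpow M (p / 2) * suppCPow M (p * w) *
        (mpow M (p / 2) * mpow S (1 / 2)) *
          (suppCPow S (w / 2) * suppCPow X (-(q * w)) * suppCPow S (w / 2))) := by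
  have hhalf : (1 + w) / 2 = ((1 / 2 : ℝ) : ℂ) + w / 2 := by
    push_cast
    ring
  have hSl : suppCPow S ((1 + w) / 2) = suppCPow S (w / 2) * mpow S (1 / 2) := by
    rw [suppCPow_mul_mpow hS one_half_pos.ne', hhalf, add_comm]
  have hSr : suppCPow S ((1 + w) / 2) = mpow S (1 / 2) * suppCPow S (w / 2) := by
    rw [mpow_mul_suppCPow hS one_half_pos.ne', hhalf]
  have hMz : suppCPow M (p * (1 + w)) = mpow M (p / 2) * suppCPow M (p * w) * mpow M (p / 2) := by
    rw [mpow_half_mul_suppCPow_mul_mpow_half hM hp, mul_one_add]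
  have hXz : (q : ℂ) * (1 - (1 + w)) = -(q * w) := by ring
  rw [traceInterpolant, hXz, hMz]
  nth_rw 1 [hSl]
  rw [hSr]
  simp only [mul_assoc]
  rw [trace_mul_comm (suppCPow S (w / 2))]
  simp only [mul_assoc]

theorem norm_traceInterpolant_le_of_re_eq_one (hS : S.PosSemidef) (hM : M.PosSemidef)
    (hX : X.IsHermitian) (hp : p ≠ 0) (q : ℝ) {z : ℂ} (hz : z.re = 1) :
    ‖traceInterpolant S M X p q z‖ ≤ (trace (mpow M p * S)).re := by
  obtain ⟨w, rfl⟩ : ∃ w, z = 1 + w := ⟨z - 1, by ring⟩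
  have hw : w.re = 0 := by simpa using hz
  let B := mpow M (p / 2) * mpow S (1 / 2)
  let K₁ := suppCPow M (p * w)
  let K₂ := suppCPow S (w / 2) * suppCPow X (-(q * w)) * suppCPow S (w / 2)
  have hB : Bᴴ = mpow S (1 / 2) * mpow M (p / 2) :=
    (conjTranspose_mul _ _).trans <|
      congrArg₂ (· * ·) (isHermitian_matFun _ S).eq (isHermitian_matFun _ M).eq
  have hBB : trace (Bᴴ * B) = trace (mpow M p * S) := by
    rw [hB, mul_assoc, ← mul_assoc (mpow M (p / 2)), trace_mul_comm, mul_assoc,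
      mpow_half_mul_self hM hp, mpow_half_mul_self hS one_ne_zero, mpow_one hS.isHermitian]
  have hK₁ : ‖K₁‖ ≤ 1 := norm_suppCPow_le_one hM.isHermitian (by simp [hw])
  have hK₂ : ‖K₂‖ ≤ 1 :=
    norm_suppCPow_mul_mul_le_one hS.isHermitian hX (by simp [hw]) (by simp [hw])
  calc ‖traceInterpolant S M X p q (1 + w)‖ = ‖trace (Bᴴ * K₁ * B * K₂)‖ := by
        rw [traceInterpolant_one_add hS hM X hp, hB]
    _ ≤ ‖K₁‖ * ‖K₂‖ * (trace (Bᴴ * B)).re := norm_trace_conjTranspose_mul_mul_mul_le B K₁ K₂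
    _ ≤ (trace (Bᴴ * B)).re := mul_le_of_le_one_left
        (re_trace_conjTranspose_mul_self_nonneg B) (mul_le_one₀ hK₁ (norm_nonneg _) hK₂)
    _ = (trace (mpow M p * S)).re := by rw [hBB]

theorem traceInterpolant_inv (hS : S.PosSemidef) (hM : M.PosSemidef) (hX : X.PosSemidef)
    (hpq : p.HolderConjugate q) :
    traceInterpolant S M X p q (p⁻¹ : ℝ) =
      trace (mpow S (p⁻¹ / 2) * M * mpow S (p⁻¹ / 2) * X) := by
  have hp : p ≠ 0 := hpq.ne_zero
  have hq : q ≠ 0 := hpq.symm.ne_zero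
  have hSpow : suppCPow S (((p⁻¹ : ℝ) : ℂ) / 2) = mpow S (p⁻¹ / 2) := by
    rw [← suppCPow_ofReal hS (by positivity)]
    push_cast
    rfl
  have hMpow : suppCPow M (p * ((p⁻¹ : ℝ) : ℂ)) = M := by
    rw [← Complex.ofReal_mul, mul_inv_cancel₀ hp, suppCPow_ofReal hM one_ne_zero,
      mpow_one hM.isHermitian]
  have hXpow : suppCPow X (q * (1 - ((p⁻¹ : ℝ) : ℂ))) = X := by
    rw [← Complex.ofReal_one, ← Complex.ofReal_sub, hpq.one_sub_inv, ← Complex.ofReal_mul,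
      mul_inv_cancel₀ hq, suppCPow_ofReal hX one_ne_zero, mpow_one hX.isHermitian]
  rw [traceInterpolant, hSpow, hMpow, hXpow]

theorem norm_trace_mpow_mul_mul_mpow_mul_le (hS : S.PosSemidef) (hM : M.PosSemidef)
    (hX : X.PosSemidef) (hpq : p.HolderConjugate q) :
    ‖trace (mpow S (p⁻¹ / 2) * M * mpow S (p⁻¹ / 2) * X)‖ ≤
      (trace (mpow X q)).re ^ q⁻¹ * (trace (mpow M p * S)).re ^ p⁻¹ := by
  have hmem : ((p⁻¹ : ℝ) : ℂ) ∈ verticalClosedStrip 0 1 :=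
    ⟨hpq.inv_nonneg, inv_le_one_of_one_le₀ hpq.lt.le⟩
  have hinterp := norm_le_interp_of_mem_verticalClosedStrip₀₁' (traceInterpolant S M X p q) hmem
    (differentiable_traceInterpolant S M X p q).diffContOnCl
    (bddAbove_norm_traceInterpolant hS.isHermitian hM.isHermitian hX.isHermitian p q)
    (fun z hz => norm_traceInterpolant_le_of_re_eq_zero hS.isHermitian hM.isHermitian hX p
      hpq.symm.ne_zero hz)
    (fun z hz => norm_traceInterpolant_le_of_re_eq_one hS hM hX.isHermitian hpq.ne_zero q hz)
  rwa [traceInterpolant_inv hS hM hX hpq, Complex.ofReal_re, hpq.one_sub_inv] at hinterp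

end Interpolation

section ChangeOfMeasure

variable {ρ σ M : Matrix d d ℂ} {γ : ℝ}

theorem mpow_conj_mpow_neg_conj (hρ : ρ.PosSemidef) (hσ : σ.PosSemidef)
    (hρσ : SuppLE ρ σ) {t : ℝ} (ht : t ≠ 0) :
    mpow σ t * (mpow σ (-t) * ρ * mpow σ (-t)) * mpow σ t = ρ := by
  have hneg : mpow σ (-t) * mpow σ t = suppProj σ := by
    simpa only [neg_neg] using mpow_mul_mpow_neg hσ (neg_ne_zero.mpr ht)
  rw [mul_assoc, mul_assoc (mpow σ (-t) * ρ), hneg, mul_assoc (mpow σ (-t)), ← mul_assoc,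
    mpow_mul_mpow_neg hσ ht, mul_suppProj_of_suppLE hσ.isHermitian hρσ,
    suppProj_mul_of_suppLE hρ.isHermitian hσ.isHermitian hρσ]

theorem posSemidef_mpow_mul_mul_mpow (hρ : ρ.PosSemidef) (σ : Matrix d d ℂ) (t : ℝ) :
    (mpow σ t * ρ * mpow σ t).PosSemidef := by
  simpa only [mpow, (isHermitian_matFun _ σ).eq] using hρ.mul_mul_conjTranspose_same (mpow σ t)

-- Only an inequality: the right-hand side is `1` when the trace is `0`, because `Real.log 0 = 0`.
theorem re_trace_rpow_inv_le_exp_sandwichedRenyi (ρ σ : Matrix d d ℂ) (hγ : 1 < γ) :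
    (trace (mpow (mpow σ ((1 - γ) / (2 * γ)) * ρ * mpow σ ((1 - γ) / (2 * γ))) γ)).re ^ γ⁻¹ ≤
      Real.exp ((γ - 1) / γ * sandwichedRenyi γ ρ σ) := by
  have hγ₁ : γ - 1 ≠ 0 := (sub_pos.mpr hγ).ne'
  calc _ ≤ Real.exp (Real.log _ * γ⁻¹) :=
        (le_abs_self _).trans (Real.abs_rpow_le_exp_log_mul _ _)
    _ = Real.exp ((γ - 1) / γ * sandwichedRenyi γ ρ σ) := by
        rw [sandwichedRenyi]
        field_simp

theorem re_trace_mul_le_exp_sandwichedRenyi (hρ : ρ.PosSemidef) (hσ : σ.PosSemidef)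
    (hρσ : SuppLE ρ σ) (hM : M.PosSemidef) {p : ℝ} (hpγ : p.HolderConjugate γ) :
    (trace (M * ρ)).re ≤
      (trace (mpow M p * σ)).re ^ p⁻¹ * Real.exp ((γ - 1) / γ * sandwichedRenyi γ ρ σ) := by
  have hp : 0 < p⁻¹ := hpγ.inv_pos
  have hexponent : (1 - γ) / (2 * γ) = -(p⁻¹ / 2) := by
    have := hpγ.symm.ne_zero
    rw [← hpγ.symm.one_sub_inv]
    field_simp
    ring
  set X := mpow σ ((1 - γ) / (2 * γ)) * ρ * mpow σ ((1 - γ) / (2 * γ)) with hX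
  have htrace : trace (M * ρ) = trace (mpow σ (p⁻¹ / 2) * M * mpow σ (p⁻¹ / 2) * X) := by
    have hrecover : mpow σ (p⁻¹ / 2) * X * mpow σ (p⁻¹ / 2) = ρ := by
      rw [hX, hexponent]
      exact mpow_conj_mpow_neg_conj hρ hσ hρσ (half_pos hp).ne'
    conv_lhs => rw [← hrecover]
    rw [← mul_assoc, trace_mul_comm]
    simp only [mul_assoc]
  calc (trace (M * ρ)).re ≤ ‖trace (M * ρ)‖ := Complex.re_le_norm _
    _ ≤ (trace (mpow X γ)).re ^ γ⁻¹ * (trace (mpow M p * σ)).re ^ p⁻¹ := by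
        rw [htrace]
        exact norm_trace_mpow_mul_mul_mpow_mul_le hσ hM (posSemidef_mpow_mul_mul_mpow hρ σ _) hpγ
    _ ≤ Real.exp ((γ - 1) / γ * sandwichedRenyi γ ρ σ) * (trace (mpow M p * σ)).re ^ p⁻¹ := by
        gcongr
        · exact Real.rpow_nonneg (re_trace_mul_nonneg (posSemidef_mpow hM p) hσ) _
        · exact re_trace_rpow_inv_le_exp_sandwichedRenyi ρ σ hpγ.symm.lt
    _ = _ := mul_comm _ _

end ChangeOfMeasure

section SubGaussian

open scoped MatrixOrder

theorem re_trace_mpow_mexp_mul_rpow_inv_le {σ L : Matrix d d ℂ} (hL : L.IsHermitian)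
    (hσ : σ.PosSemidef) {p c K : ℝ} (hp : 0 < p)
    (hMGF : (trace (mexp (p • (L - c • (1 : Matrix d d ℂ))) * σ)).re ≤ Real.exp K) :
    (trace (mpow (mexp L) p * σ)).re ^ p⁻¹ ≤ Real.exp (c + K / p) := by
  calc (trace (mpow (mexp L) p * σ)).re ^ p⁻¹ ≤ (Real.exp (p * c) * Real.exp K) ^ p⁻¹ := by
        refine Real.rpow_le_rpow
          (re_trace_mul_nonneg (posSemidef_mpow (posSemidef_mexp hL) p) hσ) ?_
          (inv_nonneg.mpr hp.le)
        rw [mpow_mexp hL p c, smul_mul_assoc, trace_smul, Complex.smul_re, smul_eq_mul]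
        gcongr
    _ = Real.exp (c + K / p) := by
        rw [← Real.exp_add, ← Real.exp_mul]
        congr 1
        field_simp

theorem true_loss_lower_bound_quantum_general
    (σjoint σprod L : Matrix d d ℂ) (α γ : ℝ) (hγ : 1 < γ)
    (hjoint : σjoint.PosSemidef) (hprod : σprod.PosSemidef)
    (hsupp : SuppLE σjoint σprod)
    (hL : L.IsHermitian)
    (hSG : (trace (mexp ((γ / (γ - 1)) • (L - (trace (L * σprod)).re • (1 : Matrix d d ℂ)))
          * σprod)).re ≤ Real.exp ((γ / (γ - 1)) ^ 2 * α ^ 2 / 2)) :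
    (trace (L * σjoint)).re *
        Real.exp (-(γ * α ^ 2 / (2 * (γ - 1)) +
          (γ - 1) / γ * sandwichedRenyi γ σjoint σprod)) ≤
      Real.exp (trace (L * σprod)).re := by
  have hpγ : (γ / (γ - 1)).HolderConjugate γ := (Real.HolderConjugate.conjExponent hγ).symm
  have hγ₁ : γ - 1 ≠ 0 := (sub_pos.mpr hγ).ne'
  have hMGF := re_trace_mpow_mexp_mul_rpow_inv_le hL hprod hpγ.pos hSG
  have hexponent : (γ / (γ - 1)) ^ 2 * α ^ 2 / 2 / (γ / (γ - 1)) = γ * α ^ 2 / (2 * (γ - 1)) := by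
    field_simp
  rw [hexponent] at hMGF
  have hempirical : (trace (L * σjoint)).re ≤
      Real.exp ((trace (L * σprod)).re + γ * α ^ 2 / (2 * (γ - 1))) *
        Real.exp ((γ - 1) / γ * sandwichedRenyi γ σjoint σprod) := by
    calc (trace (L * σjoint)).re ≤ (trace (mexp L * σjoint)).re :=
          re_trace_mul_le_re_trace_mul (le_mexp hL) hjoint
      _ ≤ _ := re_trace_mul_le_exp_sandwichedRenyi hjoint hprod hsupp (posSemidef_mexp hL) hpγ
      _ ≤ _ := by gcongr
  rwa [Real.exp_neg, ← div_eq_mul_inv, div_le_iff₀ (Real.exp_pos _), Real.exp_add, ← mul_assoc,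
    ← Real.exp_add]

end SubGaussian

/-- Sub-Gaussian lower bound on the expected true loss: if the loss
operator `L` is classical-quantum `α`-sub-Gaussian with respect to the product state
`σ_prod`, then for any `γ > 1`,
`exp(L_true) ≥ L_emp · exp(−[γα²/(2(γ−1)) + ((γ−1)/γ) D̃_γ(σ_joint‖σ_prod)])`,
where `L_emp = Tr[L σ_joint]` and `L_true = Tr[L σ_prod]`. -/
theorem true_loss_lower_bound_quantum
    (σjoint σprod L : Matrix d d ℂ) (α γ : ℝ) (hα : 0 < α) (hγ : 1 < γ)
    (hjoint : IsDensity σjoint) (hprod : IsDensity σprod)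
    (hsupp : SuppLE σjoint σprod)
    (hL : L.PosSemidef)
    (hSG : ∀ lam : ℝ,
      (Matrix.trace (mexp (lam • (L - (Matrix.trace (L * σprod)).re • (1 : Matrix d d ℂ)))
          * σprod)).re ≤ Real.exp (lam ^ 2 * α ^ 2 / 2)) :
    (Matrix.trace (L * σjoint)).re *
        Real.exp (-(γ * α ^ 2 / (2 * (γ - 1)) +
          (γ - 1) / γ * sandwichedRenyi γ σjoint σprod)) ≤
      Real.exp ((Matrix.trace (L * σprod)).re) := by
  exact true_loss_lower_bound_quantum_general σjoint σprod L α γ hγ hjoint.1 hprod.1 hsupp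
    hL.isHermitian (hSG _)
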